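/- (Proposition 2, upper boundary.) Let R₊ > 0, R₋ > 0, c > 0, β ≥ 0 and b ∈ ℝ. The function g : ℝ → ℝ defined by g(u) = R₊·exp(b + 1 − u) + c·R₋·exp(u − b − 1) − β·u attains its unique global minimum at u* = b + 1 + log((β + √(β² + 4·c·R₊·R₋)) / (2·c·R₋)), and the argument of the logarithm is strictly positive. -/

import Mathlib

/-!
At a critical point `u₀` the two exponential terms of the loss take values `p` and `q` with
`q - p = β`, so at `u₀ + t` the loss exceeds its value at `u₀` by
`p (exp (-t) - (1 - t)) + q (exp t - (1 + t))`, which is positive for `t ≠ 0`. In the variable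
`x = exp (u - b - 1)` the critical point equation is the quadratic `c R₋ x² = R₊ + β x`.
-/

section

open Real

/-- The regularized exponential loss of moving an upper boundary to `u`, with aggregate weights
`A = R₊` and `B = c R₋` and center `a = b + 1`. -/
noncomputable def expLoss (A B β a u : ℝ) : ℝ :=
  A * exp (a - u) + B * exp (u - a) - β * u

variable {A B β a : ℝ}

theorem add_sqrt_sq_add_pos {d : ℝ} (β : ℝ) (hd : 0 < d) : 0 < β + √(β ^ 2 + d) := by
  have neg_lt_sqrt : -β < √(β ^ 2 + d) := lt_sqrt_of_sq_lt (by rw [neg_sq]; linarith)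
  linarith

theorem mul_sq_eq_add_mul_of_eq_quadratic_root {x : ℝ} (hB : B ≠ 0)
    (hdiscrim : 0 ≤ β ^ 2 + 4 * A * B) (hx : x = (β + √(β ^ 2 + 4 * A * B)) / (2 * B)) :
    B * x ^ 2 = A + β * x := by
  have discrim_eq : discrim B (-β) (-A) = √(β ^ 2 + 4 * A * B) * √(β ^ 2 + 4 * A * B) := by
    rw [mul_self_sqrt hdiscrim, discrim]
    ring
  have root : B * (x * x) + -β * x + -A = 0 :=
    (quadratic_eq_zero_iff hB discrim_eq x).mpr (Or.inl (by rw [neg_neg, hx]))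
  linear_combination root

theorem add_lt_mul_exp_neg_add_mul_exp_sub {p q t : ℝ} (hp : 0 ≤ p) (hq : 0 < q) (ht : t ≠ 0) :
    p + q < p * exp (-t) + q * exp t - (q - p) * t := by
  have tangent_neg : p * (-t + 1) ≤ p * exp (-t) :=
    mul_le_mul_of_nonneg_left (add_one_le_exp (-t)) hp
  have tangent_pos : q * (t + 1) < q * exp t := mul_lt_mul_of_pos_left (add_one_lt_exp ht) hq
  linarith

theorem expLoss_lt_of_critical {u₀ u : ℝ} (hA : 0 ≤ A) (hB : 0 < B)
    (hcrit : B * exp (u₀ - a) - A * exp (a - u₀) = β) (hu : u ≠ u₀) :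
    expLoss A B β a u₀ < expLoss A B β a u := by
  have exp_neg_shift : exp (a - u) = exp (a - u₀) * exp (-(u - u₀)) := by
    rw [← exp_add]
    ring_nf
  have exp_shift : exp (u - a) = exp (u₀ - a) * exp (u - u₀) := by
    rw [← exp_add]
    ring_nf
  have increment_pos := add_lt_mul_exp_neg_add_mul_exp_sub
    (mul_nonneg hA (exp_nonneg (a - u₀))) (mul_pos hB (exp_pos (u₀ - a))) (sub_ne_zero.mpr hu)
  rw [hcrit] at increment_pos
  rw [expLoss, expLoss, exp_neg_shift, exp_shift]
  linarith

theorem critical_add_log_of_mul_sq_eq {x : ℝ} (a : ℝ) (hx : 0 < x)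
    (hroot : B * x ^ 2 = A + β * x) :
    B * exp (a + log x - a) - A * exp (a - (a + log x)) = β := by
  rw [add_sub_cancel_left, sub_add_cancel_left, exp_neg, exp_log hx]
  field_simp
  linear_combination hroot

end

theorem stmt_2_general (Rp Rm c β b : ℝ) (hRp : 0 < Rp) (hRm : 0 < Rm) (hc : 0 < c)
    (g : ℝ → ℝ)
    (hg : ∀ u, g u = Rp * Real.exp (b + 1 - u) + c * Rm * Real.exp (u - b - 1) - β * u)
    (ustar : ℝ)
    (hu : ustar = b + 1 +
      Real.log ((β + Real.sqrt (β ^ 2 + 4 * c * Rp * Rm)) / (2 * c * Rm))) :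
    0 < (β + Real.sqrt (β ^ 2 + 4 * c * Rp * Rm)) / (2 * c * Rm) ∧
    (∀ u, g ustar ≤ g u) ∧
    (∀ u, u ≠ ustar → g ustar < g u) := by
  have four_mul_eq : 4 * c * Rp * Rm = 4 * Rp * (c * Rm) := by ring
  rw [four_mul_eq, mul_assoc 2 c Rm] at hu ⊢
  have hcRm : 0 < c * Rm := mul_pos hc hRm
  have num_pos : 0 < β + Real.sqrt (β ^ 2 + 4 * Rp * (c * Rm)) :=
    add_sqrt_sq_add_pos β (by positivity)
  have root_pos : 0 < (β + Real.sqrt (β ^ 2 + 4 * Rp * (c * Rm))) / (2 * (c * Rm)) := by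
    positivity
  have critical := critical_add_log_of_mul_sq_eq (b + 1) root_pos
    (mul_sq_eq_add_mul_of_eq_quadratic_root hcRm.ne' (by positivity) rfl)
  rw [← hu] at critical
  have g_eq : g = expLoss Rp (c * Rm) β (b + 1) := by
    ext u
    rw [hg, expLoss, sub_sub u b 1]
  have lt_of_ne : ∀ u, u ≠ ustar → g ustar < g u := fun u hne =>
    g_eq ▸ expLoss_lt_of_critical hRp.le hcRm critical hne
  refine ⟨root_pos, fun u => ?_, lt_of_ne⟩
  obtain rfl | hne := eq_or_ne u ustar
  · exact le_rfl
  · exact (lt_of_ne u hne).le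

/-- Proposition 2 (upper boundary) from "Box Drawings for Learning with
Imbalanced Data": the regularized exponential loss
`g u = R₊·exp(b + 1 − u) + c·R₋·exp(u − b − 1) − β·u` attains its unique
global minimum at `u* = b + 1 + log((β + √(β² + 4cR₊R₋)) / (2cR₋))`, the
argument of the logarithm being strictly positive. -/
theorem stmt_2 (Rp Rm c β b : ℝ) (hRp : 0 < Rp) (hRm : 0 < Rm) (hc : 0 < c)
    (hβ : 0 ≤ β)
    (g : ℝ → ℝ)
    (hg : ∀ u, g u = Rp * Real.exp (b + 1 - u) + c * Rm * Real.exp (u - b - 1) - β * u)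
    (ustar : ℝ)
    (hu : ustar = b + 1 +
      Real.log ((β + Real.sqrt (β ^ 2 + 4 * c * Rp * Rm)) / (2 * c * Rm))) :
    0 < (β + Real.sqrt (β ^ 2 + 4 * c * Rp * Rm)) / (2 * c * Rm) ∧
    (∀ u, g ustar ≤ g u) ∧
    (∀ u, u ≠ ustar → g ustar < g u) :=
  stmt_2_general Rp Rm c β b hRp hRm hc g hg ustar hu
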